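/- arXiv:1904.08969 — 3 statements merged into one kernel-verified Lean document; each statement's English description precedes it below -/
import Mathlib

section
/- Let X be a functionally Hausdorff space which is a continuous image of a Čech-complete space P with l(P) < 𝔠. Then the following are equivalent: (i) every compact subset of X is scattered; (ii) for every continuous map f : X → Y to a functionally Hausdorff space Y, the image f(X) has cardinality at most max{l(P), ψ(Y)}; (iii) no continuous map f : X → [0,1] is surjective. -/
open Cardinal Set Topology

universe u

def FunctionallyHausdorff (X : Type u) [TopologicalSpace X] : Prop :=
  ∀ x y : X, x ≠ y → ∃ f : X → unitInterval, Continuous f ∧ f x = 0 ∧ f y = 1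

def IsCechComplete (X : Type u) [TopologicalSpace X] : Prop :=
  ∃ (K : Type u) (_ : TopologicalSpace K) (e : X → K),
    CompactSpace K ∧ T2Space K ∧ IsEmbedding e ∧ DenseRange e ∧ IsGδ (Set.range e)

noncomputable def lindelofNumber (X : Type u) [TopologicalSpace X] : Cardinal.{u} :=
  sInf {κ : Cardinal.{u} | ℵ₀ ≤ κ ∧ ∀ U : Set (Set X), (∀ u ∈ U, IsOpen u) → ⋃₀ U = Set.univ →
    ∃ V ⊆ U, #↥V ≤ κ ∧ ⋃₀ V = Set.univ}

noncomputable def pseudocharacter (X : Type u) [TopologicalSpace X] : Cardinal.{u} :=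
  sInf {κ : Cardinal.{u} | ℵ₀ ≤ κ ∧ ∀ x : X, ∃ 𝒰 : Set (Set X),
    #↥𝒰 ≤ κ ∧ (∀ U ∈ 𝒰, IsOpen U ∧ x ∈ U) ∧ ⋂₀ 𝒰 = ⋂₀ {U : Set X | IsOpen U ∧ x ∈ U}}

def IsScatteredSet {X : Type u} [TopologicalSpace X] (S : Set X) : Prop :=
  ∀ T ⊆ S, T.Nonempty → ∃ x ∈ T, ∃ U : Set X, IsOpen U ∧ U ∩ T = {x}

def IsKAnalytic (X : Type u) [TopologicalSpace X] : Prop :=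
  ∃ (P : Type u) (_ : TopologicalSpace P) (f : P → X),
    LindelofSpace P ∧ IsCechComplete P ∧ Continuous f ∧ Function.Surjective f

def IsAnalyticSpace (X : Type u) [TopologicalSpace X] : Prop :=
  ∃ (P : Type u) (_ : TopologicalSpace P), PolishSpace P ∧
    ∃ f : P → X, Continuous f ∧ Function.Surjective f

noncomputable def boundingNumber : Cardinal.{0} :=
  sInf {κ : Cardinal.{0} | ∃ B : Set (ℕ → ℕ), #↥B = κ ∧
    ∀ y : ℕ → ℕ, ∃ x ∈ B, {n : ℕ | ¬ x n ≤ y n}.Infinite}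

theorem FunctionallyHausdorff.t2Space {X : Type u} [TopologicalSpace X]
    (hX : FunctionallyHausdorff X) : T2Space X := by
  refine ⟨fun x y hxy => ?_⟩
  obtain ⟨f, hf, hx, hy⟩ := hX x y hxy
  exact separated_by_continuous hf (by simp [hx, hy])

/-- Disjoint finite sets in a functionally Hausdorff space are completely separated. -/
theorem FunctionallyHausdorff.exists_separating_finsets {Y : Type u} [TopologicalSpace Y]
    (hY : FunctionallyHausdorff Y) (A B : Finset Y) (hAB : ∀ a ∈ A, ∀ b ∈ B, a ≠ b) :
    ∃ f : Y → unitInterval, Continuous f ∧ (∀ a ∈ A, f a = 0) ∧ ∀ b ∈ B, f b = 1 := by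
  have hsep : ∀ a b : Y, ∃ f : Y → unitInterval, Continuous f ∧ (a ≠ b → f a = 0 ∧ f b = 1) := by
    intro a b
    by_cases h : a = b
    · exact ⟨fun _ => 0, continuous_const, fun h' => absurd h h'⟩
    · obtain ⟨f, hf, hfab⟩ := hY a b h
      exact ⟨f, hf, fun _ => hfab⟩
  choose F hFc hF using hsep
  refine ⟨fun y => unitInterval.symm
    (∏ b ∈ B, unitInterval.symm (∏ a ∈ A, F a b y)), ?_, ?_, ?_⟩
  · refine unitInterval.continuous_symm.comp (continuous_finsetProd _ fun b _ => ?_)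
    exact unitInterval.continuous_symm.comp (continuous_finsetProd _ fun a _ => hFc a b)
  · intro a ha
    beta_reduce
    rw [Finset.prod_eq_one, unitInterval.symm_one]
    intro b hb
    rw [Finset.prod_eq_zero (f := fun a' => F a' b a) ha (hF a b (hAB a ha b hb)).1,
      unitInterval.symm_zero]
  · intro b hb
    beta_reduce
    rw [Finset.prod_eq_zero hb, unitInterval.symm_zero]
    rw [Finset.prod_eq_one, unitInterval.symm_one]
    exact fun a ha => (hF a b (hAB a ha b hb)).2

/-- A family `C` of sets on which `L` holds, taking finitely many values, such that distinct
members have disjoint images under `h`. -/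
structure IsSeparatedFamily {ι P Y : Type*} (L : Set P → Prop) (h : P → Y) (C : ι → Set P) :
    Prop where
  large : ∀ b, L (C b)
  finite_range : (Set.range C).Finite
  ne_of_ne : ∀ b b', C b ≠ C b' → ∀ x ∈ C b, ∀ x' ∈ C b', h x ≠ h x'

/-- Each set satisfying `L` contains two points, with different images under `h`, such that `L` is
preserved when intersecting with a closed neighborhood of either point. -/
def Splits {P Y : Type*} [TopologicalSpace P] (L : Set P → Prop) (h : P → Y) : Prop :=
  ∀ C, L C → ∃ p : Fin 2 → P, h (p 0) ≠ h (p 1) ∧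
    ∀ i, p i ∈ C ∧ ∀ N, IsClosed N → N ∈ 𝓝 (p i) → L (C ∩ N)

theorem IsSeparatedFamily.exists_refinement {ι P K Y : Type u} [TopologicalSpace P] [TopologicalSpace K]
    [TopologicalSpace Y] [CompactSpace K] [T2Space K] [Nonempty P]
    (hY : FunctionallyHausdorff Y)
    {e : P → K} (he : Continuous e) {h : P → Y} (hh : Continuous h) {L : Set P → Prop}
    (hL : Splits L h) {O : Set K} (hO : IsOpen O) (heO : Set.range e ⊆ O)
    {C : ι → Set P} (hC : IsSeparatedFamily L h C) (β : ι → Fin 2) :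
    ∃ (C' : ι → Set P) (f : Y → ℝ), IsSeparatedFamily L h C' ∧ Continuous f ∧
      (∀ y, 0 ≤ f y ∧ f y ≤ 1) ∧ ∀ b, C' b ⊆ C b ∧ closure (e '' C' b) ⊆ O ∧
        ∀ x ∈ C' b, f (h x) = (β b : ℕ) := by
  classical
  choose! p hp hpC using hL
  have hfin := hC.finite_range
  obtain ⟨u, hu, hu0, hu1⟩ := hY.exists_separating_finsets
    (hfin.toFinset.image fun A => h (p A 0)) (hfin.toFinset.image fun A => h (p A 1)) (by
      simp only [Finset.mem_image, Set.Finite.mem_toFinset, Set.mem_range]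
      rintro _ ⟨_, ⟨b, rfl⟩, rfl⟩ _ ⟨_, ⟨b', rfl⟩, rfl⟩
      by_cases hbb : C b = C b'
      · rw [← hbb]
        exact hp _ (hC.large b)
      · exact hC.ne_of_ne b b' hbb _ (hpC _ (hC.large b) 0).1 _ (hpC _ (hC.large b') 1).1)
  have hu0' : ∀ b, u (h (p (C b) 0)) = 0 := fun b => hu0 _ (by
    simp only [Finset.mem_image, Set.Finite.mem_toFinset, Set.mem_range]
    exact ⟨_, ⟨b, rfl⟩, rfl⟩)
  have hu1' : ∀ b, u (h (p (C b) 1)) = 1 := fun b => hu1 _ (by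
    simp only [Finset.mem_image, Set.Finite.mem_toFinset, Set.mem_range]
    exact ⟨_, ⟨b, rfl⟩, rfl⟩)
  have hM : ∀ x : P, ∃ M : Set K, M ∈ 𝓝 (e x) ∧ IsClosed M ∧ M ⊆ O := fun x =>
    exists_mem_nhds_isClosed_subset (hO.mem_nhds (heO ⟨x, rfl⟩))
  choose M hMn hMc hMO using hM
  let f : Y → ℝ := fun y => max 0 (min 1 (3 * (u y : ℝ) - 1))
  have hf : Continuous f := by fun_prop
  let W : Fin 2 → Set P := ![{x | (u (h x) : ℝ) ≤ 1 / 3}, {x | 2 / 3 ≤ (u (h x) : ℝ)}]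
  have huh : Continuous fun x => (u (h x) : ℝ) := by fun_prop
  have hWc : ∀ i, IsClosed (W i) := by
    intro i
    fin_cases i
    · exact isClosed_le huh continuous_const
    · exact isClosed_le continuous_const huh
  have hWf : ∀ i, ∀ x ∈ W i, f (h x) = (i : ℕ) := by
    intro i x hx
    fin_cases i
    · have hx : (u (h x) : ℝ) ≤ 1 / 3 := hx
      have : 3 * (u (h x) : ℝ) - 1 ≤ 0 := by linarith
      simp [f, this]
    · have hx : 2 / 3 ≤ (u (h x) : ℝ) := hx
      have : 1 ≤ 3 * (u (h x) : ℝ) - 1 := by linarith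
      simp [f, this]
  have hWn : ∀ b i, W i ∈ 𝓝 (p (C b) i) := by
    intro b i
    fin_cases i
    · refine Filter.mem_of_superset ((isOpen_lt huh (continuous_const (y := (1 / 3 : ℝ)))).mem_nhds
        ?_) fun x (hx : (u (h x) : ℝ) < 1 / 3) => show (u (h x) : ℝ) ≤ 1 / 3 from hx.le
      simp [hu0']
    · refine Filter.mem_of_superset ((isOpen_lt (continuous_const (y := (2 / 3 : ℝ))) huh).mem_nhds
        ?_) fun x (hx : 2 / 3 < (u (h x) : ℝ)) => show 2 / 3 ≤ (u (h x) : ℝ) from hx.le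
      simp only [Set.mem_ofPred_eq, Fin.mk_one, hu1']
      norm_num
  let R : Set P → Fin 2 → Set P := fun A i => A ∩ (W i ∩ e ⁻¹' M (p A i))
  refine ⟨fun b => R (C b) (β b), f, ⟨fun b => ?_, ?_, ?_⟩, hf, fun y => ?_, fun b => ⟨?_, ?_, ?_⟩⟩
  · exact (hpC _ (hC.large b) (β b)).2 _ ((hWc _).inter ((hMc _).preimage he))
      (Filter.inter_mem (hWn _ _) (he.continuousAt (hMn _)))
  · refine (hfin.image2 R (Set.finite_univ (α := Fin 2))).subset ?_
    rintro _ ⟨b, rfl⟩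
    exact ⟨_, ⟨b, rfl⟩, _, trivial, rfl⟩
  · intro b b' hne x hx x' hx'
    by_cases hCC : C b = C b'
    · intro heq
      have h1 := hWf _ x hx.2.1
      rw [heq, hWf _ x' hx'.2.1] at h1
      have h2 : β b' = β b := Fin.ext (by exact_mod_cast h1)
      exact hne (by simp only [hCC, h2])
    · exact hC.ne_of_ne b b' hCC x hx.1 x' hx'.1
  · exact ⟨le_max_left _ _, max_le zero_le_one (min_le_left _ _)⟩
  · exact Set.inter_subset_left
  · refine (closure_minimal ?_ (hMc (p (C b) (β b)))).trans (hMO _)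
    rintro _ ⟨x, hx, rfl⟩
    exact hx.2.2
  · exact fun x hx => hWf _ x hx.2.1

theorem exists_continuous_eq_ofDigits {Y : Type u} [TopologicalSpace Y] (f : ℕ → Y → ℝ)
    (hf : ∀ n, Continuous (f n)) (hf01 : ∀ n y, 0 ≤ f n y ∧ f n y ≤ 1) :
    ∃ φ : Y → unitInterval, Continuous φ ∧ ∀ (d : ℕ → Fin 2) (y : Y),
      (∀ n, f n y = (d n : ℕ)) → (φ y : ℝ) = Real.ofDigits d := by
  have hcont : Continuous fun y => ∑' n, f n y * ((2 : ℝ) ^ (n + 1))⁻¹ := by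
    refine continuous_tsum (u := fun n => ((2 : ℝ) ^ (n + 1))⁻¹)
      (fun n => (hf n).mul continuous_const) ?_ fun n y => ?_
    · simpa using (summable_nat_add_iff 1).2 summable_geometric_two
    · rw [norm_mul, Real.norm_of_nonneg (hf01 n y).1, Real.norm_of_nonneg (by positivity)]
      exact mul_le_of_le_one_left (by positivity) (hf01 n y).2
  refine ⟨fun y => Set.projIcc 0 1 zero_le_one (∑' n, f n y * ((2 : ℝ) ^ (n + 1))⁻¹),
    continuous_projIcc.comp hcont, fun d y hd => ?_⟩
  have hsum : ∑' n, f n y * ((2 : ℝ) ^ (n + 1))⁻¹ = Real.ofDigits d := by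
    simp [Real.ofDigits, Real.ofDigitsTerm, hd]
  beta_reduce
  rw [hsum, Set.projIcc_of_mem _ ⟨Real.ofDigits_nonneg d, Real.ofDigits_le_one d⟩]

theorem IsCechComplete.exists_compact_image_eq_univ {P Y : Type u} [TopologicalSpace P]
    [TopologicalSpace Y] (hP : IsCechComplete P) (hY : FunctionallyHausdorff Y) {h : P → Y}
    (hh : Continuous h) {L : Set P → Prop} (hL : Splits L h) (huniv : L Set.univ) :
    ∃ (D : Set P) (φ : Y → unitInterval), IsCompact D ∧ Continuous φ ∧
      (fun x => φ (h x)) '' D = Set.univ := by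
  obtain ⟨K, _, e, _, _, he, -, hG⟩ := hP
  obtain ⟨O, hO, hrange⟩ := isGδ_iff_eq_iInter_nat.1 hG
  have heO : ∀ n, Set.range e ⊆ O n := fun n => hrange ▸ Set.iInter_subset O n
  have : Nonempty P := ⟨(hL _ huniv).choose 0⟩
  let ι : Type u := ULift (ℕ → Fin 2)
  have step : ∀ (n : ℕ) (C : {C : ι → Set P // IsSeparatedFamily L h C}),
      ∃ (C' : {C : ι → Set P // IsSeparatedFamily L h C}) (f : Y → ℝ), Continuous f ∧
      (∀ y, 0 ≤ f y ∧ f y ≤ 1) ∧ ∀ b, C'.1 b ⊆ C.1 b ∧ closure (e '' C'.1 b) ⊆ O n ∧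
        ∀ x ∈ C'.1 b, f (h x) = (b.down n : ℕ) := by
    intro n C
    obtain ⟨C', f, hC', hf⟩ := C.2.exists_refinement hY he.continuous hh hL (hO n)
      (heO n) fun b => b.down n
    exact ⟨⟨C', hC'⟩, f, hf⟩
  choose next F hFc hF01 hnext using step
  let C : ℕ → {C : ι → Set P // IsSeparatedFamily L h C} := fun n =>
    Nat.rec ⟨fun _ => Set.univ, fun _ => huniv, Set.finite_range_const, fun _ _ hne => (hne rfl).elim⟩
      (fun n C => next n C) n
  obtain ⟨φ, hφ, hφd⟩ := exists_continuous_eq_ofDigits (fun n => F n (C n))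
    (fun n => hFc n (C n)) (fun n => hF01 n (C n))
  let D : Set K := ⋂ n, ⋃ A ∈ Set.range (C (n + 1)).1, closure (e '' A)
  have hDc : IsClosed D := isClosed_iInter fun n =>
    (C (n + 1)).2.finite_range.isClosed_biUnion fun _ _ => isClosed_closure
  have hDr : D ⊆ Set.range e := by
    rw [hrange]
    refine Set.iInter_mono fun n => Set.iUnion₂_subset ?_
    rintro _ ⟨b, rfl⟩
    exact (hnext n (C n) b).2.1
  refine ⟨e ⁻¹' D, φ, (he.isInducing.isCompact_preimage_iff hDr).2 hDc.isCompact, hφ, ?_⟩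
  rw [Set.eq_univ_iff_forall]
  intro t
  obtain ⟨d, -, hd⟩ := Real.ofDigits_SurjOn one_lt_two t.2
  have hne : ∀ n, ((C n).1 ⟨d⟩).Nonempty := fun n => by
    obtain ⟨p, -, hp⟩ := hL _ ((C n).2.large ⟨d⟩)
    exact ⟨p 0, (hp 0).1⟩
  obtain ⟨k, hk⟩ := IsCompact.nonempty_iInter_of_sequence_nonempty_isCompact_isClosed
    (fun n => closure (e '' (C (n + 1)).1 ⟨d⟩))
    (fun n => closure_mono (Set.image_mono (hnext (n + 1) (C (n + 1)) ⟨d⟩).1))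
    (fun n => ((hne (n + 1)).image e).closure) isClosed_closure.isCompact fun _ => isClosed_closure
  rw [Set.mem_iInter] at hk
  have hkD : k ∈ D := Set.mem_iInter.2 fun n => Set.mem_biUnion ⟨_, rfl⟩ (hk n)
  obtain ⟨x, rfl⟩ := hDr hkD
  refine ⟨x, hkD, Subtype.ext ?_⟩
  rw [hφd d (h x) fun n => ?_, hd]
  have hx : x ∈ closure ((C (n + 1)).1 ⟨d⟩) := by
    rw [he.closure_eq_preimage_closure_image]
    exact hk n
  exact closure_minimal (t := {x | F n (C n) (h x) = (d n : ℕ)}) (hnext n (C n) ⟨d⟩).2.2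
    (isClosed_eq ((hFc n (C n)).comp hh) continuous_const) hx

theorem not_isScatteredSet_of_image_eq_univ {X : Type u} [TopologicalSpace X] {K : Set X}
    (hK : IsCompact K) {ψ : X → unitInterval} (hψ : Continuous ψ) (hψK : ψ '' K = Set.univ) :
    ¬ IsScatteredSet K := by
  intro hs
  have := isCompact_iff_compactSpace.1 hK
  obtain ⟨E, hEc, hE, hmin⟩ := exists_compact_surjective_zorn_subset
    (X := fun x : K => ULift.up.{u} (ψ x))
    (continuous_uliftUp.comp (hψ.comp continuous_subtype_val)) (fun ⟨t⟩ => by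
      obtain ⟨x, hx, rfl⟩ : t ∈ ψ '' K := hψK ▸ Set.mem_univ t
      exact ⟨⟨x, hx⟩, rfl⟩)
  have hEne : E.Nonempty := by
    rw [← Set.image_nonempty, hE]
    exact Set.univ_nonempty
  obtain ⟨_, ⟨x, hxE, rfl⟩, U, hU, hUx⟩ := hs (Subtype.val '' E) (by simp) (hEne.image _)
  have hxU : (x : X) ∈ U := (hUx.symm ▸ Set.mem_singleton _ : (x : X) ∈ U ∩ _).1
  have hclosed : IsClosed {z : E | (z : X) ∉ U} :=
    (hU.preimage (continuous_subtype_val.comp continuous_subtype_val)).isClosed_compl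
  refine hmin {z : E | (z : X) ∉ U} ?_ hclosed ?_
  · intro heq
    exact (heq.symm ▸ Set.mem_univ _ : (⟨x, hxE⟩ : E) ∈ {z : E | (z : X) ∉ U}) hxU
  · have hcont : Continuous (E.domRestrict fun x : K => ULift.up.{u} (ψ x)) :=
      continuous_uliftUp.comp ((hψ.comp continuous_subtype_val).comp continuous_subtype_val)
    have hclimg := (hclosed.isCompact.image hcont).isClosed
    rw [← hclimg.closure_eq]
    have hdense : Dense (ULift.up.{u} '' {ψ x}ᶜ) :=
      ULift.up_surjective.denseRange.dense_image continuous_uliftUp (dense_compl_singleton (ψ x))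
    refine Dense.closure_eq (hdense.mono ?_)
    rintro _ ⟨t, ht, rfl⟩
    obtain ⟨z, hzE, hz⟩ : ULift.up t ∈ (fun x : K => ULift.up.{u} (ψ x)) '' E := hE ▸ Set.mem_univ _
    obtain rfl : ψ z = t := congrArg ULift.down hz
    refine ⟨⟨z, hzE⟩, fun hzU => ht ?_, rfl⟩
    have hzx : (z : X) = x := hUx.subset ⟨hzU, z, hzE, rfl⟩
    exact congrArg ψ hzx

theorem isCechComplete_of_compactSpace (K : Type u) [TopologicalSpace K] [CompactSpace K]
    [T2Space K] : IsCechComplete K :=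
  ⟨K, inferInstance, id, inferInstance, inferInstance, .id, denseRange_id, by simp⟩

theorem exists_surjective_of_not_isScatteredSet {X : Type u} [TopologicalSpace X]
    (hX : FunctionallyHausdorff X) {K : Set X} (hK : IsCompact K) (hs : ¬ IsScatteredSet K) :
    ∃ f : X → unitInterval, Continuous f ∧ Function.Surjective f := by
  unfold IsScatteredSet at hs
  push Not at hs
  obtain ⟨T, hTK, hTne, hT⟩ := hs
  have := hX.t2Space
  have := isCompact_iff_compactSpace.1 hK
  obtain ⟨D, φ, -, hφ, hD⟩ := (isCechComplete_of_compactSpace K).exists_compact_image_eq_univ hX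
    (h := Subtype.val) continuous_subtype_val
    (L := fun C => ∃ U : Set K, IsOpen U ∧ (∃ x ∈ U, (x : X) ∈ T) ∧ ∀ x ∈ U, (x : X) ∈ T → x ∈ C)
    (by
      rintro C ⟨U, hU, ⟨x, hxU, hxT⟩, hUC⟩
      have hlarge : ∀ z ∈ U, (z : X) ∈ T → z ∈ C ∧ ∀ N, IsClosed N → N ∈ 𝓝 z →
          ∃ V : Set K, IsOpen V ∧ (∃ x ∈ V, (x : X) ∈ T) ∧ ∀ x ∈ V, (x : X) ∈ T → x ∈ C ∩ N :=
        fun z hzU hzT => ⟨hUC z hzU hzT, fun N _ hN => ⟨U ∩ interior N, hU.inter isOpen_interior,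
          ⟨z, ⟨hzU, mem_interior_iff_mem_nhds.2 hN⟩, hzT⟩,
          fun y hy hyT => ⟨hUC y hy.1 hyT, interior_subset hy.2⟩⟩⟩
      obtain ⟨V, hV, rfl⟩ := isOpen_induced_iff.1 hU
      obtain ⟨y, hyV, hyT, hyx⟩ : ∃ y, y ∈ V ∧ y ∈ T ∧ y ≠ x := by
        by_contra! hcon
        refine hT x hxT V hV (Set.Subset.antisymm (fun y hy => hcon y hy.1 hy.2) ?_)
        rintro _ rfl
        exact ⟨hxU, hxT⟩
      refine ⟨![x, ⟨y, hTK hyT⟩], hyx.symm, fun i => ?_⟩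
      fin_cases i
      · exact hlarge x hxU hxT
      · exact hlarge ⟨y, hTK hyT⟩ hyV hyT)
    (by
      obtain ⟨x, hx⟩ := hTne
      exact ⟨Set.univ, isOpen_univ, ⟨⟨x, hTK hx⟩, trivial, hx⟩, fun _ _ _ => trivial⟩)
  refine ⟨φ, hφ, fun t => ?_⟩
  obtain ⟨x, -, hx⟩ := hD.symm ▸ Set.mem_univ t
  exact ⟨x, hx⟩

theorem lindelofNumber_spec (X : Type u) [TopologicalSpace X] :
    ℵ₀ ≤ lindelofNumber X ∧ ∀ U : Set (Set X), (∀ u ∈ U, IsOpen u) → ⋃₀ U = Set.univ →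
      ∃ V ⊆ U, #↥V ≤ lindelofNumber X ∧ ⋃₀ V = Set.univ :=
  csInf_mem (s := {κ : Cardinal.{u} | ℵ₀ ≤ κ ∧ ∀ U : Set (Set X), (∀ u ∈ U, IsOpen u) →
    ⋃₀ U = Set.univ → ∃ V ⊆ U, #↥V ≤ κ ∧ ⋃₀ V = Set.univ})
    ⟨max ℵ₀ #(Set X), le_max_left _ _, fun U _ hU =>
      ⟨U, subset_rfl, (mk_set_le U).trans (le_max_right _ _), hU⟩⟩

theorem pseudocharacter_spec (X : Type u) [TopologicalSpace X] :
    ℵ₀ ≤ pseudocharacter X ∧ ∀ x : X, ∃ 𝒰 : Set (Set X), #↥𝒰 ≤ pseudocharacter X ∧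
      (∀ U ∈ 𝒰, IsOpen U ∧ x ∈ U) ∧ ⋂₀ 𝒰 = ⋂₀ {U : Set X | IsOpen U ∧ x ∈ U} :=
  csInf_mem (s := {κ : Cardinal.{u} | ℵ₀ ≤ κ ∧ ∀ x : X, ∃ 𝒰 : Set (Set X),
    #↥𝒰 ≤ κ ∧ (∀ U ∈ 𝒰, IsOpen U ∧ x ∈ U) ∧ ⋂₀ 𝒰 = ⋂₀ {U : Set X | IsOpen U ∧ x ∈ U}})
    ⟨max ℵ₀ #(Set X), le_max_left _ _, fun x => ⟨{U | IsOpen U ∧ x ∈ U},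
      (mk_set_le _).trans (le_max_right _ _), fun _ h => h, rfl⟩⟩

theorem exists_sInter_eq_singleton (Y : Type u) [TopologicalSpace Y] [T1Space Y] (y : Y) :
    ∃ 𝒰 : Set (Set Y), #↥𝒰 ≤ pseudocharacter Y ∧ (∀ U ∈ 𝒰, IsOpen U) ∧ ⋂₀ 𝒰 = {y} := by
  obtain ⟨𝒰, hcard, hU, hInter⟩ := (pseudocharacter_spec Y).2 y
  refine ⟨𝒰, hcard, fun U h => (hU U h).1, hInter.trans (Set.Subset.antisymm ?_ ?_)⟩
  · intro z hz
    by_contra hne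
    exact hz {z}ᶜ ⟨isOpen_compl_singleton, fun h => hne h.symm⟩ rfl
  · rintro _ rfl U hU
    exact hU.2

theorem pseudocharacter_le_aleph0 (Y : Type u) [TopologicalSpace Y] [FirstCountableTopology Y] :
    pseudocharacter Y ≤ ℵ₀ := by
  refine csInf_le' ⟨le_rfl, fun x => ?_⟩
  obtain ⟨B, hB⟩ := (𝓝 x).exists_antitone_basis
  refine ⟨Set.range fun n => interior (B n), ?_, ?_, ?_⟩
  · exact mk_le_aleph0_iff.2 (Set.countable_range _).to_subtype
  · rintro _ ⟨n, rfl⟩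
    exact ⟨isOpen_interior, mem_interior_iff_mem_nhds.2 (hB.1.mem_of_mem trivial)⟩
  · refine Set.Subset.antisymm (fun z hz U hU => ?_) (Set.sInter_subset_sInter ?_)
    · obtain ⟨n, -, hn⟩ := hB.1.mem_iff.1 (hU.1.mem_nhds hU.2)
      exact hn (interior_subset (hz _ ⟨n, rfl⟩))
    · rintro _ ⟨n, rfl⟩
      exact ⟨isOpen_interior, mem_interior_iff_mem_nhds.2 (hB.1.mem_of_mem trivial)⟩

theorem functionallyHausdorff_of_normalSpace (Y : Type u) [TopologicalSpace Y] [T1Space Y]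
    [NormalSpace Y] : FunctionallyHausdorff Y := by
  intro x y hxy
  obtain ⟨f, hf0, hf1, hf⟩ := exists_continuous_zero_one_of_isClosed (isClosed_singleton (x := x))
    (isClosed_singleton (x := y)) (by simpa using hxy)
  exact ⟨fun z => ⟨f z, hf z⟩, by fun_prop, Subtype.ext (hf0 rfl), Subtype.ext (hf1 rfl)⟩

theorem mk_image_le_of_subset_biUnion {P Y : Type u} {κ : Cardinal.{u}} (hκ : ℵ₀ ≤ κ) (h : P → Y)
    {C : Set P} {ι : Type u} {V : Set ι} (hV : #V ≤ κ) {S : ι → Set P}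
    (hC : C ⊆ ⋃ v ∈ V, S v) (hS : ∀ v ∈ V, #↥(h '' S v) ≤ κ) : #↥(h '' C) ≤ κ := by
  have hsub : h '' C ⊆ ⋃ v ∈ V, h '' S v := by
    rw [← Set.image_iUnion₂]
    exact Set.image_mono hC
  calc #↥(h '' C) ≤ #↥(⋃ v ∈ V, h '' S v) := mk_le_mk_of_subset hsub
    _ ≤ #V * ⨆ v : V, #↥(h '' S v.1) := mk_biUnion_le _ _
    _ ≤ κ * κ := mul_le_mul' hV (ciSup_le' fun v => hS v.1 v.2)
    _ = κ := mul_eq_self hκ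

theorem exists_forall_nhds_lt_mk_image {P Y : Type u} [TopologicalSpace P] {κ : Cardinal.{u}}
    (hκ : lindelofNumber P ≤ κ) (h : P → Y) {C : Set P} (hCc : IsClosed C)
    (hC : κ < #↥(h '' C)) : ∃ p ∈ C, ∀ N ∈ 𝓝 p, κ < #↥(h '' (C ∩ N)) := by
  have hspec := lindelofNumber_spec P
  by_contra! hcon
  let U : Set (Set P) := {u | IsOpen u ∧ #↥(h '' (C ∩ u)) ≤ κ}
  have hU : ⋃₀ U = Set.univ := by
    refine Set.eq_univ_of_forall fun p => ?_
    by_cases hp : p ∈ C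
    · obtain ⟨N, hN, hle⟩ := hcon p hp
      refine ⟨interior N, ⟨isOpen_interior, le_trans (mk_le_mk_of_subset ?_) hle⟩,
        mem_interior_iff_mem_nhds.2 hN⟩
      exact Set.image_mono (Set.inter_subset_inter_right _ interior_subset)
    · exact ⟨Cᶜ, ⟨hCc.isOpen_compl, by simp⟩, hp⟩
  obtain ⟨V, hVU, hV, hVu⟩ := hspec.2 U (fun u hu => hu.1) hU
  refine hC.not_ge (mk_image_le_of_subset_biUnion (hspec.1.trans hκ) h (hV.trans hκ)
    (S := fun v => C ∩ v) (fun x hx => ?_) fun v hv => (hVU hv).2)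
  obtain ⟨v, hv, hxv⟩ := hVu.symm ▸ Set.mem_univ x
  exact Set.mem_biUnion hv ⟨hx, hxv⟩

theorem splits_lt_mk_image {P Y : Type u} [TopologicalSpace P] [TopologicalSpace Y] [T1Space Y]
    {κ : Cardinal.{u}} (hl : lindelofNumber P ≤ κ) (hψ : pseudocharacter Y ≤ κ) {h : P → Y}
    (hh : Continuous h) : Splits (fun C => IsClosed C ∧ κ < #↥(h '' C)) h := by
  rintro C ⟨hCc, hC⟩
  have hκ : ℵ₀ ≤ κ := (lindelofNumber_spec P).1.trans hl
  obtain ⟨p, hpC, hp⟩ := exists_forall_nhds_lt_mk_image hl h hCc hC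
  obtain ⟨𝒰, h𝒰, hopen, hInter⟩ := exists_sInter_eq_singleton Y (h p)
  obtain ⟨U, hU, hlt⟩ : ∃ U ∈ 𝒰, κ < #↥(h '' (C ∩ h ⁻¹' Uᶜ)) := by
    by_contra! hcon
    have hle : #↥(h '' (C ∩ h ⁻¹' {h p}ᶜ)) ≤ κ := by
      refine mk_image_le_of_subset_biUnion hκ h (h𝒰.trans hψ) (S := fun U => C ∩ h ⁻¹' Uᶜ)
        (fun x hx => ?_) hcon
      have hx' : h x ∉ ⋂₀ 𝒰 := hInter ▸ hx.2
      simp only [Set.mem_sInter, not_forall] at hx'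
      obtain ⟨U, hU, hxU⟩ := hx'
      exact Set.mem_biUnion hU ⟨hx.1, hxU⟩
    have hsub : h '' C ⊆ insert (h p) (h '' (C ∩ h ⁻¹' {h p}ᶜ)) := by
      rintro _ ⟨x, hx, rfl⟩
      by_cases hxp : h x = h p
      · exact Or.inl hxp
      · exact Or.inr ⟨x, ⟨hx, hxp⟩, rfl⟩
    refine hC.not_ge ((mk_le_mk_of_subset hsub).trans (mk_insert_le.trans ?_))
    exact add_le_of_le hκ hle (one_le_aleph0.trans hκ)
  obtain ⟨q, hqC, hq⟩ := exists_forall_nhds_lt_mk_image hl h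
    (hCc.inter ((hopen U hU).isClosed_compl.preimage hh)) hlt
  refine ⟨![p, q], fun heq => hqC.2 ?_, fun i => ?_⟩
  · have hpU : h p ∈ ⋂₀ 𝒰 := hInter ▸ rfl
    have heq : h p = h q := heq
    exact heq ▸ hpU U hU
  · fin_cases i
    · exact ⟨hpC, fun N hNc hN => ⟨hCc.inter hNc, hp N hN⟩⟩
    · refine ⟨hqC.1, fun N hNc hN => ⟨hCc.inter hNc, (hq N hN).trans_le (mk_le_mk_of_subset ?_)⟩⟩
      exact Set.image_mono (Set.inter_subset_inter_left _ Set.inter_subset_left)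

theorem stmt1 {X P : Type u} [TopologicalSpace X] [TopologicalSpace P]
    (hX : FunctionallyHausdorff X) (hP : IsCechComplete P)
    (g : P → X) (hg : Continuous g) (hgs : Function.Surjective g)
    (hl : lindelofNumber P < Cardinal.continuum) :
    List.TFAE
      [ ∀ K : Set X, IsCompact K → IsScatteredSet K,
        ∀ (Y : Type u) (_ : TopologicalSpace Y), FunctionallyHausdorff Y →
          ∀ f : X → Y, Continuous f →
            #↥(Set.range f) ≤ max (lindelofNumber P) (pseudocharacter Y),
        ¬ ∃ f : X → unitInterval, Continuous f ∧ Function.Surjective f ] := by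
  tfae_have 1 → 2 := by
    intro hscat Y _ hY f hf
    by_contra! hlt
    have := hY.t2Space
    rw [← hgs.range_comp f, ← Set.image_univ] at hlt
    obtain ⟨D, φ, hD, hφ, himg⟩ := hP.exists_compact_image_eq_univ hY (hf.comp hg)
      (splits_lt_mk_image (le_max_left _ _) (le_max_right _ _) (hf.comp hg)) ⟨isClosed_univ, hlt⟩
    refine not_isScatteredSet_of_image_eq_univ (hD.image hg) (hφ.comp hf) ?_
      (hscat _ (hD.image hg))
    rw [← himg, Set.image_image]
    rfl
  tfae_have 2 → 3 := by
    rintro h2 ⟨f, hf, hfs⟩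
    have hle := h2 (ULift.{u} unitInterval) inferInstance (functionallyHausdorff_of_normalSpace _)
      (fun x => ULift.up (f x)) (continuous_uliftUp.comp hf)
    have hsurj : Function.Surjective fun x => (ULift.up (f x) : ULift.{u} unitInterval) :=
      ULift.up_surjective.comp hfs
    have hcard : #(ULift.{u} unitInterval) = 𝔠 := by
      rw [mk_uLift, mk_Icc_real zero_lt_one, lift_continuum]
    rw [hsurj.range_eq, mk_univ, hcard] at hle
    exact hle.not_gt (max_lt hl ((pseudocharacter_le_aleph0 _).trans_lt aleph0_lt_continuum))
  tfae_have 3 → 1 := by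
    intro h3 K hK
    by_contra hs
    exact h3 (exists_surjective_of_not_isScatteredSet hX hK hs)
  tfae_finish
end

section
/- Assume ω₁ = 𝔟. Then there exists an uncountable Hausdorff topological space X with a unique non-isolated point such that X is K-analytic and every compact subset of X is at most countable. -/
open Cardinal Set Topology

universe u

open Filter

/-- A countable family of functions is eventually dominated by a single function. -/
theorem exists_eventually_dominating {ι : Type*} [Countable ι] (c : ι → ℕ → ℕ) :
    ∃ y : ℕ → ℕ, ∀ i, ∀ᶠ n in atTop, c i n ≤ y n := by
  obtain ⟨f, hf⟩ := exists_injective_nat ι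
  have hfin : ∀ n, {i | f i ≤ n}.Finite := fun n =>
    (finite_Iic n).preimage hf.injOn
  refine ⟨fun n => ∑ i ∈ (hfin n).toFinset, c i n, fun i => ?_⟩
  filter_upwards [eventually_ge_atTop (f i)] with n hn
  exact Finset.single_le_sum (f := fun i => c i n) (fun _ _ => Nat.zero_le _) (by simpa using hn)

/-- If `𝔟 = ℵ₁`, there is an uncountable family of functions each of whose pointwise bounded
subfamilies is countable. -/
theorem exists_uncountable_family_of_boundingNumber_eq
    (hb : Cardinal.aleph 1 = boundingNumber) :
    ∃ (I : Type) (y : I → ℕ → ℕ), Uncountable I ∧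
      ∀ g : ℕ → ℕ, {i | ∀ n, y i n ≤ g n}.Countable := by
  have hne : {κ : Cardinal.{0} | ∃ B : Set (ℕ → ℕ), #↥B = κ ∧
      ∀ y : ℕ → ℕ, ∃ x ∈ B, {n : ℕ | ¬ x n ≤ y n}.Infinite}.Nonempty := by
    by_contra h
    rw [not_nonempty_iff_eq_empty] at h
    rw [boundingNumber, h, Cardinal.sInf_empty] at hb
    exact (Cardinal.aleph_pos 1).ne' hb
  obtain ⟨I, b, hI, hunb⟩ : ∃ (I : Type) (b : I → ℕ → ℕ), #I = Cardinal.aleph 1 ∧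
      ∀ y : ℕ → ℕ, ∃ i, {n : ℕ | ¬ b i n ≤ y n}.Infinite := by
    obtain ⟨B, hB, hunb⟩ := csInf_mem hne
    exact ⟨B, Subtype.val, hB.trans hb.symm, fun y =>
      let ⟨x, hxB, hx⟩ := hunb y
      ⟨⟨x, hxB⟩, hx⟩⟩
  obtain ⟨_, _, hord⟩ := Cardinal.exists_ord_eq_type_lt I
  have hIio : ∀ i : I, (Iio i).Countable := fun i => by
    rw [← Cardinal.le_aleph0_iff_set_countable, ← Cardinal.lt_aleph_one_iff]
    exact hI ▸ Cardinal.mk_Iio_lt i hord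
  have hdom : ∀ i : I, ∃ y : ℕ → ℕ, ∀ j ≤ i, ∀ᶠ n in atTop, b j n ≤ y n := fun i => by
    have hc : (Iic i).Countable := by
      rw [← Iio_insert]
      exact (hIio i).insert i
    have := hc.to_subtype
    obtain ⟨y, hy⟩ := exists_eventually_dominating fun j : Iic i => b j
    exact ⟨y, fun j hj => hy ⟨j, hj⟩⟩
  choose y hy using hdom
  refine ⟨I, y, ?_, fun g => ?_⟩
  · rw [← Cardinal.aleph0_lt_mk_iff, hI]
    exact Cardinal.aleph0_lt_aleph_one
  · obtain ⟨j, hj⟩ := hunb g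
    refine (hIio j).mono fun i hi => ?_
    by_contra hlt
    refine hj ?_
    have h := hy i j (not_lt.1 hlt)
    rw [← Nat.cofinite_eq_atTop, eventually_cofinite] at h
    exact h.subset fun n hn hle => hn (hle.trans (hi n))

/-- A space that maps properly to a Lindelöf space is Lindelöf. -/
theorem IsProperMap.lindelofSpace {X Y : Type*} [TopologicalSpace X] [TopologicalSpace Y]
    [LindelofSpace Y] {f : X → Y} (hf : IsProperMap f) : LindelofSpace X := by
  refine ⟨fun F _ _ _ => ?_⟩
  obtain ⟨z, hz⟩ := cluster_point_of_Lindelof (map f F)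
  obtain ⟨x, -, hx⟩ := hf.clusterPt_of_mapClusterPt hz
  exact ⟨x, mem_univ x, hx⟩

/-- A space that embeds in a compact Hausdorff space as the intersection of a closed set and a
`Gδ` set is Čech-complete. -/
theorem IsCechComplete.of_isEmbedding {P L : Type u} [TopologicalSpace P] [TopologicalSpace L]
    [CompactSpace L] [T2Space L] {e : P → L} (he : IsEmbedding e) {G : Set L} (hG : IsGδ G)
    (hr : range e = closure (range e) ∩ G) : IsCechComplete P := by
  let e' : P → closure (range e) := codRestrict e _ fun x => subset_closure (mem_range_self x)
  refine ⟨closure (range e), inferInstance, e', isCompact_iff_compactSpace.1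
    isClosed_closure.isCompact, inferInstance, he.codRestrict _ _, ?_, ?_⟩
  · refine IsEmbedding.subtypeVal.isInducing.dense_iff.2 ?_
    rintro ⟨x, hx⟩
    rwa [← range_comp]
  · have : range e' = Subtype.val ⁻¹' G := by
      ext ⟨x, hx⟩
      have hiff : x ∈ range e ↔ x ∈ G := by
        rw [hr]
        exact and_iff_right hx
      rw [mem_preimage, ← hiff]
      simp only [e', mem_range, Subtype.ext_iff, val_codRestrict_apply]
    rw [this]
    exact hG.preimage continuous_subtype_val

/-- A closed subspace of the product of the Baire space and a compact Hausdorff space is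
Čech-complete. -/
theorem isCechComplete_of_isClosed_prod {C : Type} [TopologicalSpace C] [CompactSpace C]
    [T2Space C] {P : Set ((ℕ → ℕ) × C)} (hP : IsClosed P) : IsCechComplete P := by
  let j : (ℕ → ℕ) × C → (ℕ → OnePoint ℕ) × C :=
    Prod.map (Pi.map fun _ n => (n : OnePoint ℕ)) id
  have hj : IsEmbedding j :=
    (IsEmbedding.piMap fun _ => OnePoint.isOpenEmbedding_coe.isEmbedding).prodMap .id
  have hrange : range j = ⋂ n, {p | p.1 n ∈ range ((↑) : ℕ → OnePoint ℕ)} := by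
    ext ⟨a, c⟩
    simp only [mem_range, mem_iInter, mem_ofPred_eq, Prod.exists]
    constructor
    · rintro ⟨α, c', h⟩ n
      exact ⟨α n, congrFun (congrArg Prod.fst h) n⟩
    · intro h
      choose α hα using h
      exact ⟨α, c, Prod.ext (funext hα) rfl⟩
  have hG : IsGδ (range j) := by
    rw [hrange]
    exact .iInter_of_isOpen fun n => OnePoint.isOpen_range_coe.preimage (by fun_prop)
  refine IsCechComplete.of_isEmbedding (hj.comp IsEmbedding.subtypeVal) hG ?_
  rw [range_comp, Subtype.range_coe]
  refine Subset.antisymm (subset_inter subset_closure (image_subset_range _ _)) ?_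
  rintro _ ⟨hx, p, rfl⟩
  refine mem_image_of_mem j ?_
  rw [← hP.closure_eq, hj.isInducing.closure_eq_preimage_closure_image]
  exact hx

section Construction

variable {I : Type} (y : I → ℕ → ℕ)

/-- The indices whose functions are bounded by `α` below `n`. -/
def boundedBelow (α : ℕ → ℕ) (n : ℕ) : Set I := {i | ∀ k < n, y i k ≤ α k}

theorem boundedBelow_anti (α : ℕ → ℕ) {m n : ℕ} (h : m ≤ n) :
    boundedBelow y α n ⊆ boundedBelow y α m := fun _ hi k hk => hi k (hk.trans_le h)

/-- The sets of indices which, near every `α`, have only finitely many members whose functions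
are bounded by `α`. -/
def IsSmall (J : Set I) : Prop := ∀ α : ℕ → ℕ, ∃ n, (boundedBelow y α n ∩ J).Finite

variable {y}

theorem IsSmall.mono {J J' : Set I} (hJ : IsSmall y J) (h : J' ⊆ J) : IsSmall y J' := fun α =>
  let ⟨n, hn⟩ := hJ α
  ⟨n, hn.subset (inter_subset_inter_right _ h)⟩

theorem IsSmall.union {J J' : Set I} (hJ : IsSmall y J) (hJ' : IsSmall y J') :
    IsSmall y (J ∪ J') := fun α => by
  obtain ⟨m, hm⟩ := hJ α
  obtain ⟨n, hn⟩ := hJ' α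
  refine ⟨max m n, ?_⟩
  rw [inter_union_distrib_left]
  exact (hm.subset (inter_subset_inter_left _ (boundedBelow_anti y α (le_max_left m n)))).union
    (hn.subset (inter_subset_inter_left _ (boundedBelow_anti y α (le_max_right m n))))

theorem isSmall_of_finite {J : Set I} (hJ : J.Finite) : IsSmall y J := fun _ =>
  ⟨0, hJ.subset inter_subset_right⟩

theorem IsSmall.countable {J : Set I} (hJ : IsSmall y J) : J.Countable := by
  let T : (Σ n, Fin n → ℕ) → Set I := fun s => {i ∈ J | ∀ k : Fin s.1, y i k ≤ s.2 k}
  refine (countable_iUnion fun s : {s // (T s).Finite} => s.2.countable).mono fun i hi => ?_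
  obtain ⟨n, hn⟩ := hJ (y i)
  refine mem_iUnion.2 ⟨⟨⟨n, fun k => y i k⟩, hn.subset ?_⟩, hi, fun k => le_rfl⟩
  exact fun j hj => ⟨fun k hk => hj.2 ⟨k, hk⟩, hj.1⟩

theorem isSmall_of_injOn {J : Set I} {k : ℕ} (h : InjOn (fun i => y i k) J) : IsSmall y J :=
  fun α => ⟨k + 1, Finite.of_injOn (f := fun i => y i k) (t := Iic (α k))
    (fun _ hi => hi.1 k k.lt_succ_self) (h.mono inter_subset_right) (finite_Iic _)⟩

/-- If pointwise bounded subfamilies are countable, every uncountable set of indices contains an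
infinite small set. -/
theorem exists_infinite_isSmall_subset (hy : ∀ g : ℕ → ℕ, {i | ∀ n, y i n ≤ g n}.Countable)
    {A : Set I} (hA : ¬ A.Countable) : ∃ J ⊆ A, J.Infinite ∧ IsSmall y J := by
  have : ∃ k, ((fun i => y i k) '' A).Infinite := by
    by_contra! h
    have hbdd := fun k => (h k).bddAbove
    choose g hg using hbdd
    exact hA ((hy g).mono fun i hi n => hg n (mem_image_of_mem _ hi))
  obtain ⟨k, hk⟩ := this
  obtain ⟨J, hJA, hJ⟩ := (surjOn_image (fun i => y i k) A).exists_bijOn_subset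
  exact ⟨J, hJA, fun hfin => hk (hJ.image_eq ▸ hfin.image _), isSmall_of_injOn hJ.injOn⟩

variable (y)

/-- The index type with a point at infinity, whose neighbourhoods are the complements of the
small sets; all other points are isolated. -/
abbrev smallTopology : TopologicalSpace (Option I) where
  IsOpen U := none ∈ U → IsSmall y (some ⁻¹' Uᶜ)
  isOpen_univ _ := isSmall_of_finite (by simp)
  isOpen_inter U V hU hV h := by
    rw [compl_inter, preimage_union]
    exact (hU h.1).union (hV h.2)
  isOpen_sUnion S hS := by
    rintro ⟨U, hU, h⟩
    exact (hS U hU h).mono (preimage_mono (compl_subset_compl.2 (subset_sUnion_of_mem hU)))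

theorem isOpen_smallTopology_iff {U : Set (Option I)} :
    IsOpen[smallTopology y] U ↔ (none ∈ U → IsSmall y (some ⁻¹' Uᶜ)) := Iff.rfl

theorem isOpen_smallTopology_of_none_notMem {U : Set (Option I)} (h : none ∉ U) :
    IsOpen[smallTopology y] U := fun h' => (h h').elim

theorem isOpen_smallTopology_compl_singleton (i : I) :
    IsOpen[smallTopology y] {some i}ᶜ := fun _ =>
  isSmall_of_finite ((finite_singleton i).subset fun j hj => by simpa using hj)

theorem t2Space_smallTopology : @T2Space (Option I) (smallTopology y) := by
  let _ := smallTopology y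
  have key : ∀ (i : I) (x : Option I), some i ≠ x →
      ∃ u v : Set (Option I), IsOpen u ∧ IsOpen v ∧ some i ∈ u ∧ x ∈ v ∧ Disjoint u v :=
    fun i x hx => ⟨{some i}, {some i}ᶜ, isOpen_smallTopology_of_none_notMem y (by simp),
      isOpen_smallTopology_compl_singleton y i, rfl, hx.symm, disjoint_compl_right⟩
  refine ⟨fun x z hxz => ?_⟩
  match x, z with
  | some i, z => exact key i z hxz
  | none, some i =>
    obtain ⟨u, v, hu, hv, hiu, hxv, huv⟩ := key i none hxz.symm
    exact ⟨v, u, hv, hu, hxv, hiu, huv.symm⟩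
  | none, none => exact (hxz rfl).elim

theorem existsUnique_not_isOpen_singleton [Uncountable I] :
    ∃! x : Option I, ¬ IsOpen[smallTopology y] {x} := by
  refine ⟨none, fun h => ?_, fun x hx => ?_⟩
  · have hc := (h rfl).countable
    have : (some ⁻¹' ({none} : Set (Option I))ᶜ : Set I) = Set.univ := by ext; simp
    rw [this] at hc
    exact not_countable_univ hc
  · by_contra hne
    exact hx (isOpen_smallTopology_of_none_notMem y fun h => hne h.symm)

theorem countable_of_isCompact_smallTopology
    (hy : ∀ g : ℕ → ℕ, {i | ∀ n, y i n ≤ g n}.Countable) {K : Set (Option I)}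
    (hK : @IsCompact _ (smallTopology y) K) : K.Countable := by
  let _ := smallTopology y
  by_contra hc
  have hA : ¬ (some ⁻¹' K : Set I).Countable := fun h =>
    hc <| ((h.image some).insert none).mono fun x hx => by
      cases x with
      | none => exact mem_insert _ _
      | some i => exact mem_insert_of_mem _ (mem_image_of_mem some hx)
  obtain ⟨J, hJA, hinf, hJ⟩ := exists_infinite_isSmall_subset hy hA
  have hclosed : IsClosed (some '' J) := ⟨fun _ => by
    rwa [compl_compl, preimage_image_eq _ (Option.some_injective I)]⟩
  have hcomp : IsCompact (some '' J) := hK.of_isClosed_subset hclosed (image_subset_iff.2 hJA)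
  refine (hinf.image (Option.some_injective I).injOn) (hcomp.finite ?_)
  rw [isDiscrete_iff_forall_mem_exists_isOpen]
  rintro _ ⟨i, hi, rfl⟩
  exact ⟨{some i}, isOpen_smallTopology_of_none_notMem y (by simp), by
    simpa using hi⟩

/-- The graph of the compact-valued map sending `α` to the point at infinity and all `i` with
`y i ≤ α`, inside the product of the Baire space and the one-point compactification. -/
def boundedGraph : Set ((ℕ → ℕ) × OnePoint I) :=
  {p | ∀ i : I, p.2 = i → ∀ k, y i k ≤ p.1 k}

theorem isClosed_boundedGraph [TopologicalSpace I] [DiscreteTopology I] :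
    IsClosed (boundedGraph y) := by
  have : boundedGraph y = ⋂ (i : I) (k : ℕ),
      ({p | p.2 = (i : OnePoint I)}ᶜ ∪ {p | y i k ≤ p.1 k}) := by
    ext p
    simp only [boundedGraph, mem_ofPred_eq, mem_iInter, mem_union, mem_compl_iff, imp_iff_not_or]
    exact forall_congr' fun i => by rw [forall_or_left]
  rw [this]
  refine isClosed_iInter fun i => isClosed_iInter fun k => IsClosed.union ?_ ?_
  · have h : IsOpen ({(i : OnePoint I)} : Set (OnePoint I)) := by
      simpa using OnePoint.isOpen_image_coe.2 (isOpen_discrete ({i} : Set I))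
    exact (h.preimage continuous_snd).isClosed_compl
  · exact isClosed_le continuous_const (by fun_prop)

theorem continuous_boundedGraph_snd [TopologicalSpace I] [DiscreteTopology I] :
    @Continuous (boundedGraph y) (Option I) _ (smallTopology y) fun p => p.1.2 := by
  let _ := smallTopology y
  refine ⟨fun U hU => ?_⟩
  rw [isOpen_iff_mem_nhds]
  rintro ⟨⟨α, x⟩, hp⟩ hx
  induction x using OnePoint.rec with
  | infty =>
    obtain ⟨n, hn⟩ := hU hx α
    have hV : IsOpen ((((↑) : I → OnePoint I) '' (boundedBelow y α n ∩ some ⁻¹' Uᶜ))ᶜ) :=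
      OnePoint.isOpen_compl_image_coe.2 ⟨isClosed_discrete _, hn.isCompact⟩
    have hW : IsOpen {β : ℕ → ℕ | ∀ k < n, β k = α k} := by
      have : {β : ℕ → ℕ | ∀ k < n, β k = α k} = (Iio n).pi fun k => {α k} := by
        ext; simp [Set.mem_pi]
      rw [this]
      exact isOpen_set_pi (finite_Iio n) fun _ _ => isOpen_discrete _
    refine mem_of_superset
      (((hW.prod hV).preimage continuous_subtype_val).mem_nhds ⟨fun _ _ => rfl, by simp⟩) ?_
    rintro ⟨⟨β, z⟩, hz⟩ ⟨hβ, hzV⟩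
    induction z using OnePoint.rec with
    | infty => exact hx
    | coe i =>
      by_contra hiU
      exact hzV ⟨i, ⟨fun k hk => (hz i rfl k).trans (hβ k hk).le, hiU⟩, rfl⟩
  | coe i =>
    have h : IsOpen ({(i : OnePoint I)} : Set (OnePoint I)) := by
      simpa using OnePoint.isOpen_image_coe.2 (isOpen_discrete ({i} : Set I))
    refine mem_of_superset
      ((h.preimage (continuous_snd.comp continuous_subtype_val)).mem_nhds rfl) ?_
    rintro ⟨⟨β, z⟩, hz⟩ (rfl : z = i)
    exact hx

theorem isKAnalytic_smallTopology : @IsKAnalytic (Option I) (smallTopology y) := by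
  let _ : TopologicalSpace I := ⊥
  have : DiscreteTopology I := ⟨rfl⟩
  have hclosed := isClosed_boundedGraph y
  refine ⟨boundedGraph y, inferInstance, fun p => p.1.2, ?_,
    isCechComplete_of_isClosed_prod hclosed, continuous_boundedGraph_snd y, fun x => ?_⟩
  · exact (isProperMap_fst_of_compactSpace.comp hclosed.isProperMap_subtypeVal).lindelofSpace
  · cases x with
    | none => exact ⟨⟨(0, OnePoint.infty), fun i h => (OnePoint.infty_ne_coe i h).elim⟩, rfl⟩
    | some i =>
      refine ⟨⟨(y i, (i : OnePoint I)), fun j h k => ?_⟩, rfl⟩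
      rw [OnePoint.coe_injective h]

end Construction

theorem stmt9 (hb : Cardinal.aleph 1 = boundingNumber) :
    ∃ (X : Type) (_ : TopologicalSpace X), T2Space X ∧ ¬ Countable X ∧
      (∃! x : X, ¬ IsOpen ({x} : Set X)) ∧ IsKAnalytic X ∧
      ∀ K : Set X, IsCompact K → K.Countable := by
  obtain ⟨I, y, _, hy⟩ := exists_uncountable_family_of_boundingNumber_eq hb
  refine ⟨Option I, smallTopology y, t2Space_smallTopology y, fun h => ?_,
    existsUnique_not_isOpen_singleton y, isKAnalytic_smallTopology y,
    fun K hK => countable_of_isCompact_smallTopology y hy hK⟩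
  exact not_countable (α := I) (Option.some_injective I).countable
end

section
/- The following are equivalent: (1) ω₁ < 𝔟; (2) every K-analytic topological space in which every compact subset is at most countable is itself at most countable. -/
open Cardinal Set Topology

universe u

/-- Countably many functions `ℕ → ℕ` have a common bound modulo finite sets. -/
theorem exists_eventual_bound_of_countable {S : Set (ℕ → ℕ)} (hS : S.Countable) :
    ∃ y : ℕ → ℕ, ∀ x ∈ S, {n : ℕ | ¬ x n ≤ y n}.Finite := by
  rcases S.eq_empty_or_nonempty with rfl | hne
  · exact ⟨0, by simp⟩
  obtain ⟨f, rfl⟩ := hS.exists_eq_range hne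
  refine ⟨fun n => ∑ i ∈ Finset.range (n + 1), f i n, ?_⟩
  rintro _ ⟨i, rfl⟩
  refine (Set.finite_lt_nat i).subset fun n hn => ?_
  by_contra hin
  refine hn (Finset.single_le_sum (f := fun i => f i n) (fun _ _ => Nat.zero_le _) ?_)
  simp only [mem_ofPred_eq, not_lt] at hin
  simp only [Finset.mem_range]
  omega

/-- A bound modulo finite sets becomes an everywhere bound after adding a constant. -/
theorem exists_le_add_of_finite {x y : ℕ → ℕ} (h : {n : ℕ | ¬ x n ≤ y n}.Finite) :
    ∃ M : ℕ, ∀ n, x n ≤ y n + M := by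
  refine ⟨∑ n ∈ h.toFinset, x n, fun n => ?_⟩
  by_cases hn : x n ≤ y n
  · omega
  · have := Finset.single_le_sum (f := x) (s := h.toFinset) (fun _ _ => Nat.zero_le _)
      (show n ∈ h.toFinset by simpa using hn)
    omega

/-- A family of fewer than `𝔟` functions is bounded modulo finite sets. -/
theorem exists_eventual_bound_of_lt_boundingNumber {S : Set (ℕ → ℕ)}
    (hS : #S < boundingNumber) : ∃ y : ℕ → ℕ, ∀ x ∈ S, {n : ℕ | ¬ x n ≤ y n}.Finite := by
  by_contra h
  push Not at h
  exact hS.not_ge (csInf_le' ⟨S, rfl, by simpa using h⟩)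

theorem exists_unbounded_of_card_eq_boundingNumber :
    ∃ (ι : Type) (f : ι → ℕ → ℕ), #ι = boundingNumber ∧
      ∀ y : ℕ → ℕ, ∃ a, {n : ℕ | ¬ f a n ≤ y n}.Infinite := by
  have hne : {κ : Cardinal.{0} | ∃ B : Set (ℕ → ℕ), #↥B = κ ∧
      ∀ y : ℕ → ℕ, ∃ x ∈ B, {n : ℕ | ¬ x n ≤ y n}.Infinite}.Nonempty :=
    ⟨_, Set.univ, rfl, fun y =>
      ⟨fun n => y n + 1, mem_univ _, by simpa using Set.infinite_univ⟩⟩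
  obtain ⟨B, hcard, hB⟩ := csInf_mem hne
  exact ⟨B, Subtype.val, hcard, fun y => let ⟨x, hx, h⟩ := hB y; ⟨⟨x, hx⟩, h⟩⟩

/-- If `𝔟 ≤ ω₁`, there is an uncountable family all of whose pointwise bounded subfamilies are
countable. -/
theorem exists_uncountable_locally_countable_family (h : boundingNumber ≤ Cardinal.aleph 1) :
    ∃ (ι : Type) (g : ι → ℕ → ℕ), Uncountable ι ∧ ∀ y : ℕ → ℕ, {a | g a ≤ y}.Countable := by
  obtain ⟨ι, f, hcard, hf⟩ := exists_unbounded_of_card_eq_boundingNumber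
  have hunc : Uncountable ι := by
    by_contra hc
    rw [not_uncountable_iff] at hc
    obtain ⟨y, hy⟩ := exists_eventual_bound_of_countable (countable_range f)
    obtain ⟨a, hinf⟩ := hf y
    exact hinf (hy _ (mem_range_self a))
  obtain ⟨_, _, hord⟩ := Cardinal.exists_ord_eq_type_lt ι
  have hIio (a : ι) : (Iio a).Countable := by
    rw [← Cardinal.le_aleph0_iff_set_countable, ← Cardinal.lt_aleph_one_iff]
    exact (Cardinal.mk_Iio_lt a hord).trans_le (hcard.le.trans h)
  have hIic (a : ι) : (Iic a).Countable := by
    rw [← Iio_union_right]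
    exact (hIio a).union (countable_singleton a)
  choose g hg using fun a : ι => exists_eventual_bound_of_countable ((hIic a).image f)
  refine ⟨ι, g, hunc, fun y => ?_⟩
  by_contra hy
  obtain ⟨b, hinf⟩ := hf y
  obtain ⟨a, ha, hba⟩ : ∃ a, g a ≤ y ∧ b ≤ a := by
    by_contra! hlt
    exact hy ((hIio b).mono hlt)
  exact hinf ((hg a _ (mem_image_of_mem f hba)).subset fun n hn hle => hn (hle.trans (ha n)))

/-- A Lindelöf space is covered, inside an open set of an ambient regular space, by countably many
closed sets. -/
theorem exists_closed_cover_of_lindelof {P K : Type*} [TopologicalSpace P] [TopologicalSpace K]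
    [LindelofSpace P] [Nonempty P] [RegularSpace K] {e : P → K} (he : Continuous e) {U : Set K}
    (hU : IsOpen U) (hPU : range e ⊆ U) :
    ∃ D : ℕ → Set K, (∀ k, IsClosed (D k)) ∧ (∀ k, D k ⊆ U) ∧ ∀ p, ∃ k, e p ∈ D k := by
  choose C hCn hCc hCU using fun p : P =>
    exists_mem_nhds_isClosed_subset (hU.mem_nhds (hPU (mem_range_self p)))
  obtain ⟨t, htc, ht⟩ := LindelofSpace.elim_nhds_subcover (fun p => e ⁻¹' C p)
    fun p => he.continuousAt (hCn p)
  have htne : t.Nonempty := by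
    by_contra hte
    rw [not_nonempty_iff_eq_empty] at hte
    simp [hte, eq_comm (a := (∅ : Set P))] at ht
  obtain ⟨s, rfl⟩ := htc.exists_eq_range htne
  refine ⟨fun k => C (s k), fun k => hCc _, fun k => hCU _, fun p => ?_⟩
  have hp : p ∈ ⋃ x ∈ range s, e ⁻¹' C x := ht ▸ mem_univ p
  simpa using hp

/-- A Lindelöf Čech-complete space maps to `ℕ → ℕ` so that preimages of bounded sets are contained
in compact sets. -/
theorem exists_compact_of_bounded {P : Type u} [TopologicalSpace P] [LindelofSpace P]
    [Nonempty P] (hP : IsCechComplete P) :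
    ∃ φ : P → ℕ → ℕ, ∀ y : ℕ → ℕ, ∃ C : Set P, IsCompact C ∧ ∀ p, φ p ≤ y → p ∈ C := by
  obtain ⟨K, _, e, _, _, he, -, hG⟩ := hP
  obtain ⟨U, hUo, hU⟩ := isGδ_iff_eq_iInter_nat.1 hG
  choose D hDc hDU hD using fun n =>
    exists_closed_cover_of_lindelof he.continuous (hUo n) (hU.le.trans (iInter_subset U n))
  choose φ hφ using hD
  refine ⟨fun p n => φ n p, fun y => ?_⟩
  have hclosed : IsClosed (⋂ n, ⋃ k ∈ Iic (y n), D n k) :=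
    isClosed_iInter fun n => (finite_Iic (y n)).isClosed_biUnion fun k _ => hDc n k
  refine ⟨e ⁻¹' ⋂ n, ⋃ k ∈ Iic (y n), D n k,
    he.isInducing.isCompact_preimage' hclosed.isCompact ?_, fun p hp => ?_⟩
  · rw [hU]
    exact iInter_mono fun n => iUnion₂_subset fun k _ => hDU n k
  · simp only [mem_preimage, mem_iInter, mem_iUnion]
    exact fun n => ⟨φ n p, hp n, hφ n p⟩

theorem countable_of_isKAnalytic (h : Cardinal.aleph 1 < boundingNumber) {X : Type u}
    [TopologicalSpace X] (hX : IsKAnalytic X)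
    (hK : ∀ K : Set X, IsCompact K → K.Countable) : Countable X := by
  obtain ⟨P, _, f, _, hP, hf, hsurj⟩ := hX
  by_contra hunc
  rw [not_countable_iff] at hunc
  have : Nonempty P := ⟨(hsurj (Classical.arbitrary X)).choose⟩
  obtain ⟨φ, hφ⟩ := exists_compact_of_bounded hP
  obtain ⟨ι, hι⟩ : ∃ ι : Type, #ι = Cardinal.aleph 1 := ⟨_, Cardinal.mk_out _⟩
  have hιunc : Uncountable ι := by
    rw [← Cardinal.aleph0_lt_mk_iff, hι]
    exact Cardinal.aleph0_lt_aleph_one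
  obtain ⟨i⟩ : Nonempty (ι ↪ X) := by
    rw [← Cardinal.lift_mk_le', hι]
    simp [Cardinal.aleph_one_le_iff]
  choose s hs using hsurj
  obtain ⟨y, hy⟩ := exists_eventual_bound_of_lt_boundingNumber
    (S := range fun a => φ (s (i a))) ((Cardinal.mk_range_le.trans hι.le).trans_lt h)
  choose M hM using fun a => exists_le_add_of_finite (hy _ (mem_range_self a))
  choose C hC hφC using hφ
  have hcover : (⋃ m : ℕ, i ⁻¹' (f '' C fun n => y n + m)) = Set.univ :=
    eq_univ_of_forall fun a => mem_iUnion.2 ⟨M a, s (i a), hφC _ _ (hM a), hs _⟩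
  refine not_countable_univ (α := ι) (hcover ▸ countable_iUnion fun m => ?_)
  exact (hK _ ((hC _).image hf)).preimage i.injective

theorem lindelofSpace_prod_compactSpace (Y Z : Type*) [TopologicalSpace Y] [TopologicalSpace Z]
    [LindelofSpace Y] [CompactSpace Z] : LindelofSpace (Y × Z) := by
  refine ⟨isLindelof_of_countable_subcover fun {ι} U hUo hU => ?_⟩
  have hfin (y : Y) : ∃ t : Finset ι, ∃ V ∈ 𝓝 y, V ×ˢ (univ : Set Z) ⊆ ⋃ i ∈ t, U i := by
    obtain ⟨t, ht⟩ := (isCompact_singleton.prod isCompact_univ :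
      IsCompact ({y} ×ˢ (univ : Set Z))).elim_finite_subcover U hUo ((subset_univ _).trans hU)
    obtain ⟨V, W, hV, -, hyV, hW, hVW⟩ := generalized_tube_lemma isCompact_singleton isCompact_univ
      (isOpen_biUnion fun i _ => hUo i) ht
    exact ⟨t, V, hV.mem_nhds (hyV rfl), (prod_mono_right hW).trans hVW⟩
  choose t V hV hVt using hfin
  obtain ⟨s, hsc, hs⟩ := LindelofSpace.elim_nhds_subcover V hV
  refine ⟨⋃ y ∈ s, t y, hsc.biUnion fun y _ => (t y).countable_toSet, fun z _ => ?_⟩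
  obtain ⟨y, hys, hzy⟩ := mem_iUnion₂.1 (hs ▸ mem_univ z.1)
  obtain ⟨i, hi, hzi⟩ := mem_iUnion₂.1 (hVt y ⟨hzy, mem_univ z.2⟩)
  exact mem_biUnion (mem_biUnion hys hi) hzi

/-- A closed subspace of a `Gδ` subspace of a compact Hausdorff space is Čech-complete. -/
theorem isCechComplete_of_isClosed {Y Z : Type u} [TopologicalSpace Y] [TopologicalSpace Z]
    [CompactSpace Z] [T2Space Z] {j : Y → Z} (hj : IsEmbedding j) (hG : IsGδ (range j))
    {P : Set Y} (hP : IsClosed P) : IsCechComplete P := by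
  refine ⟨closure (j '' P), inferInstance,
    fun p => ⟨j p, subset_closure (mem_image_of_mem j p.2)⟩,
    isCompact_iff_compactSpace.1 isClosed_closure.isCompact, inferInstance,
    (hj.comp IsEmbedding.subtypeVal).codRestrict _ _, ?_, ?_⟩
  · intro z
    rw [closure_subtype, ← range_comp]
    convert z.2
    ext w
    simp
  · convert hG.preimage (f := (Subtype.val : closure (j '' P) → Z)) continuous_subtype_val
    ext ⟨z, hz⟩
    constructor
    · rintro ⟨p, hp⟩
      exact ⟨p, congrArg Subtype.val hp⟩
    · rintro ⟨y, rfl⟩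
      have hy : y ∈ P := by
        rw [← hP.closure_eq, hj.closure_eq_preimage_closure_image]
        exact hz
      exact ⟨⟨y, hy⟩, rfl⟩

section DominatedQuotient

variable {ι : Type u}

/-- The pairs `(y, a)` with `g a ≤ y`, together with all pairs `(y, ∞)`. -/
def DominatedPairs (g : ι → ℕ → ℕ) : Set ((ℕ → ℕ) × OnePoint ι) :=
  {z | ∀ a : ι, z.2 = a → g a ≤ z.1}

/-- The set `ι ∪ {∞}` with the quotient topology from `DominatedPairs g`. -/
def DominatedQuotient (_g : ι → ℕ → ℕ) : Type u := OnePoint ι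

/-- The second projection of `DominatedPairs g`. -/
def DominatedPairs.snd (g : ι → ℕ → ℕ) (p : DominatedPairs g) : DominatedQuotient g := p.1.2

/-- The points of `DominatedQuotient g` other than `∞`. -/
def DominatedQuotient.of (g : ι → ℕ → ℕ) (a : ι) : DominatedQuotient g := (a : OnePoint ι)

theorem DominatedQuotient.of_injective (g : ι → ℕ → ℕ) :
    Function.Injective (DominatedQuotient.of g) := OnePoint.coe_injective

theorem DominatedPairs.snd_surjective (g : ι → ℕ → ℕ) :
    Function.Surjective (DominatedPairs.snd g) := by
  intro x
  induction x using OnePoint.rec with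
  | infty => exact ⟨⟨(0, OnePoint.infty), fun a ha => (OnePoint.infty_ne_coe a ha).elim⟩, rfl⟩
  | coe a =>
    exact ⟨⟨(g a, a), fun b hb => (congrArg g (OnePoint.coe_injective hb)).ge⟩, rfl⟩

variable [TopologicalSpace ι]

instance (g : ι → ℕ → ℕ) : TopologicalSpace (DominatedQuotient g) :=
  TopologicalSpace.coinduced (DominatedPairs.snd g) inferInstance

variable [DiscreteTopology ι]

theorem isOpen_singleton_coe_onePoint (a : ι) : IsOpen ({(a : OnePoint ι)} : Set (OnePoint ι)) := by
  rw [← image_singleton, OnePoint.isOpen_image_coe]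
  exact isOpen_discrete _

theorem DominatedPairs.isClosed (g : ι → ℕ → ℕ) : IsClosed (DominatedPairs g) := by
  simp only [DominatedPairs, ofPred_forall]
  exact isClosed_iInter fun a =>
    isClosed_imp ((isOpen_singleton_coe_onePoint a).preimage continuous_snd)
      (isClosed_le continuous_const continuous_fst)

theorem DominatedPairs.isCechComplete (g : ι → ℕ → ℕ) : IsCechComplete (DominatedPairs g) := by
  have hj : IsEmbedding (Prod.map (Pi.map fun _ : ℕ => ((↑) : ℕ → OnePoint ℕ))
      (id : OnePoint ι → OnePoint ι)) :=
    (IsEmbedding.piMap fun _ => OnePoint.isOpenEmbedding_coe.isEmbedding).prodMap IsEmbedding.id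
  refine isCechComplete_of_isClosed hj ?_ (DominatedPairs.isClosed g)
  have hrange : range (Prod.map (Pi.map fun _ : ℕ => ((↑) : ℕ → OnePoint ℕ))
      (id : OnePoint ι → OnePoint ι)) =
      ⋂ n : ℕ, (fun z => z.1 n) ⁻¹' range ((↑) : ℕ → OnePoint ℕ) := by
    ext ⟨z, w⟩
    simp only [mem_range, mem_iInter, mem_preimage]
    constructor
    · rintro ⟨⟨y, v⟩, hyv⟩ n
      exact ⟨y n, congrFun (congrArg Prod.fst hyv) n⟩
    · intro h
      choose y hy using h
      exact ⟨(y, w), Prod.ext (funext hy) rfl⟩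
  rw [hrange]
  exact .iInter_of_isOpen fun n => OnePoint.isOpen_range_coe.preimage (by fun_prop)

theorem DominatedQuotient.isKAnalytic (g : ι → ℕ → ℕ) : IsKAnalytic (DominatedQuotient g) := by
  have := lindelofSpace_prod_compactSpace (ℕ → ℕ) (OnePoint ι)
  exact ⟨DominatedPairs g, inferInstance, DominatedPairs.snd g,
    isLindelof_iff_lindelofSpace.1 (DominatedPairs.isClosed g).isLindelof,
    DominatedPairs.isCechComplete g, continuous_coinduced_rng, DominatedPairs.snd_surjective g⟩

theorem DominatedQuotient.isOpen_singleton_of (g : ι → ℕ → ℕ) (a : ι) :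
    IsOpen {DominatedQuotient.of g a} := by
  rw [isOpen_coinduced]
  exact (isOpen_singleton_coe_onePoint a).preimage (continuous_snd.comp continuous_subtype_val)

theorem DominatedQuotient.isClosed_image_of (g : ι → ℕ → ℕ) {A : Set ι} {n : ℕ}
    (hA : ∀ k, {a ∈ A | g a n ≤ k}.Finite) : IsClosed (DominatedQuotient.of g '' A) := by
  rw [isClosed_coinduced]
  have heq : DominatedPairs.snd g ⁻¹' (DominatedQuotient.of g '' A) =
      ⋃ a : A, {p : DominatedPairs g | p.1.2 = ((a : ι) : OnePoint ι)} := by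
    ext p
    simp only [mem_preimage, mem_image, mem_iUnion, Subtype.exists]
    exact ⟨fun ⟨a, ha, h⟩ => ⟨a, ha, h.symm⟩, fun ⟨a, ha, h⟩ => ⟨a, ha, h.symm⟩⟩
  rw [heq]
  refine LocallyFinite.isClosed_iUnion (fun p => ?_) fun a =>
    isClosed_eq (by fun_prop) continuous_const
  refine ⟨{q | q.1.1 n = p.1.1 n}, ?_, ?_⟩
  · have hc : Continuous fun q : DominatedPairs g => q.1.1 n := by fun_prop
    exact ((isOpen_discrete {p.1.1 n}).preimage hc).mem_nhds rfl
  · refine ((hA (p.1.1 n)).preimage Subtype.val_injective.injOn).subset ?_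
    rintro a ⟨q, hqa, hq⟩
    exact ⟨a.2, (q.2 a hqa n).trans (le_of_eq hq)⟩

theorem DominatedQuotient.countable_of_isCompact (g : ι → ℕ → ℕ)
    (hg : ∀ y : ℕ → ℕ, {a | g a ≤ y}.Countable) {K : Set (DominatedQuotient g)}
    (hK : IsCompact K) : K.Countable := by
  have hbdd (n : ℕ) : ((fun a => g a n) '' (DominatedQuotient.of g ⁻¹' K)).Finite := by
    by_contra hinf
    obtain ⟨A, hAK, hA⟩ := exists_subset_bijOn (DominatedQuotient.of g ⁻¹' K) fun a => g a n
    have hclosed : IsClosed (DominatedQuotient.of g '' A) :=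
      DominatedQuotient.isClosed_image_of g (n := n) fun k =>
        Finite.of_finite_image ((finite_Iic k).subset (by rintro _ ⟨a, ha, rfl⟩; exact ha.2))
          (hA.injOn.mono fun a ha => ha.1)
    have hcompact := hK.of_isClosed_subset hclosed (image_subset_iff.2 hAK)
    obtain ⟨t, ht⟩ := hcompact.elim_finite_subcover (fun a => {DominatedQuotient.of g a})
      (DominatedQuotient.isOpen_singleton_of g) (by
        rintro _ ⟨a, -, rfl⟩
        exact mem_iUnion.2 ⟨a, rfl⟩)
    have hfin : A.Finite := t.finite_toSet.subset fun a ha => by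
      obtain ⟨b, hb, hab⟩ := mem_iUnion₂.1 (ht (mem_image_of_mem _ ha))
      rwa [DominatedQuotient.of_injective g hab]
    exact hinf (hA.image_eq ▸ hfin.image _)
  choose y hy using fun n => (hbdd n).bddAbove
  have hpre : (DominatedQuotient.of g ⁻¹' K).Countable :=
    (hg y).mono fun a ha n => hy n (mem_image_of_mem _ ha)
  refine ((hpre.image (DominatedQuotient.of g)).union
    (countable_singleton (OnePoint.infty : OnePoint ι))).mono fun x hx => ?_
  induction x using OnePoint.rec with
  | infty => exact .inr rfl
  | coe a => exact .inl ⟨a, hx, rfl⟩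

end DominatedQuotient

theorem stmt10 :
    Cardinal.aleph 1 < boundingNumber ↔
      ∀ (X : Type u) (_ : TopologicalSpace X), IsKAnalytic X →
        (∀ K : Set X, IsCompact K → K.Countable) → Countable X := by
  refine ⟨fun h X _ hX hK => countable_of_isKAnalytic h hX hK, fun h => ?_⟩
  by_contra hb
  obtain ⟨ι, g, hunc, hg⟩ := exists_uncountable_locally_countable_family (not_lt.1 hb)
  let _ : TopologicalSpace (ULift.{u} ι) := ⊥
  have : DiscreteTopology (ULift.{u} ι) := ⟨rfl⟩
  let g' : ULift.{u} ι → ℕ → ℕ := fun a => g a.down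
  have := h (DominatedQuotient g') inferInstance (DominatedQuotient.isKAnalytic g')
    fun K => DominatedQuotient.countable_of_isCompact g' fun y =>
      (hg y).preimage ULift.down_injective
  have hcount : Countable (ULift.{u} ι) := (DominatedQuotient.of_injective g').countable
  exact not_countable (α := ι) (Equiv.ulift.symm.injective.countable)
end
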